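/- arXiv:2306.14075 — 2 statements merged into one kernel-verified Lean document; each statement's English description precedes it below -/
import Mathlib

section
/- Let R, S, T be finite binary relations and let Q = {(x, y, z) : (x, y) ∈ R, (y, z) ∈ S, and (z, x) ∈ T} be the triangle join. Then |Q|^3 ≤ ||deg_R(Y|X)||_2^2 · ||deg_S(Z|Y)||_2^2 · ||deg_T(X|Z)||_2^2, i.e. |Q| ≤ (||deg_R(Y|X)||_2^2 · ||deg_S(Z|Y)||_2^2 · ||deg_T(X|Z)||_2^2)^{1/3}. -/
open scoped BigOperators

namespace JoinBounds

noncomputable section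

variable {α β γ : Type*}

/-- Degree of the value `x` in the first coordinate of a binary relation `R`:
the number of distinct `y` with `(x, y) ∈ R`. -/
def degFst [DecidableEq α] [DecidableEq β] (R : Finset (α × β)) (x : α) : ℕ :=
  (R.filter fun t => t.1 = x).card

/-- The square of the `ℓ_2`-norm of the degree sequence of a binary relation,
conditioned on the first coordinate. -/
def l2sqFst [DecidableEq α] [DecidableEq β] (R : Finset (α × β)) : ℝ :=
  ∑ x ∈ R.image Prod.fst, (degFst R x : ℝ) ^ 2

/-- The triangle join `Q = {(x, y, z) : (x, y) ∈ R ∧ (y, z) ∈ S ∧ (z, x) ∈ T}`. -/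
def triangleJoin [DecidableEq α] [DecidableEq β] [DecidableEq γ]
    (R : Finset (α × β)) (S : Finset (β × γ)) (T : Finset (γ × α)) : Finset (α × β × γ) :=
  (((R ×ˢ S).filter fun t => t.1.2 = t.2.1).image fun t => (t.1.1, t.1.2, t.2.2)).filter
    fun t => (t.2.2, t.1) ∈ T

end

/-!
This is the counting form of an entropy argument. If `(X, Y, Z)` is uniform on the join, then
`H(X) + 2 H(Y|X)` is at most the logarithm of the squared `ℓ_2`-norm for `R`; adding the three
such bounds and pairing each `H(X, Y)` with `H(Z|Y) ≥ H(Z|X, Y)` gives at least `3 H(X, Y, Z)`.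

Without entropy: a result `q` lying over `t = (x, y) ∈ R` gets the weight `deg_R(x) / n_R(q)`, where
`n_R(q)` is the number of results lying over `t`. For each relation the weights sum to at most the
squared `ℓ_2`-norm. Since `n_R(q) ≤ deg_S(y)`, and cyclically, the three weights of `q` multiply to
at least `1`, so Hölder's inequality bounds the cube of the number of results by the product of the
three sums.
-/

section

open Finset MeasureTheory

variable {ι κ A B C : Type*}

theorem sum_prod_rpow_le_prod_sum_rpow {s : Finset ι} {t : Finset κ} {f : κ → ι → ℝ} {w : κ → ℝ}
    (hf : ∀ j ∈ t, ∀ i ∈ s, 0 ≤ f j i) (hw : ∀ j ∈ t, 0 ≤ w j) (hw_sum : ∑ j ∈ t, w j = 1) :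
    ∑ i ∈ s, ∏ j ∈ t, f j i ^ w j ≤ ∏ j ∈ t, (∑ i ∈ s, f j i) ^ w j := by
  let _ : MeasurableSpace ι := ⊤
  have holder := ENNReal.lintegral_prod_norm_pow_le (μ := .restrict .count (s : Set ι)) t
    (f := fun j i => ENNReal.ofReal (f j i)) (fun _ _ => measurable_from_top.aemeasurable)
    hw_sum hw
  simp only [lintegral_finset, Measure.count_singleton, mul_one] at holder
  have hsum : ∀ j ∈ t, 0 ≤ ∑ i ∈ s, f j i := fun j hj => sum_nonneg (hf j hj)
  have hpow : ∀ j ∈ t, ∀ i ∈ s, 0 ≤ f j i ^ w j := fun j hj i hi =>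
    Real.rpow_nonneg (hf j hj i hi) _
  have hpow_sum : ∀ j ∈ t, 0 ≤ (∑ i ∈ s, f j i) ^ w j := fun j hj => Real.rpow_nonneg (hsum j hj) _
  rw [← ENNReal.ofReal_le_ofReal_iff (prod_nonneg hpow_sum),
    ENNReal.ofReal_sum_of_nonneg fun i hi => prod_nonneg fun j hj => hpow j hj i hi,
    ENNReal.ofReal_prod_of_nonneg hpow_sum]
  convert holder using 2 with i hi j hj
  · rw [ENNReal.ofReal_prod_of_nonneg fun j hj => hpow j hj i hi]
    exact prod_congr rfl fun j hj =>
      (ENNReal.ofReal_rpow_of_nonneg (hf j hj i hi) (hw j hj)).symm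
  · rw [← ENNReal.ofReal_rpow_of_nonneg (hsum j hj) (hw j hj),
      ENNReal.ofReal_sum_of_nonneg (hf j hj)]

theorem card_pow_card_le_prod_sum {s : Finset ι} {t : Finset κ} {f : κ → ι → ℝ}
    (hf : ∀ j ∈ t, ∀ i ∈ s, 0 ≤ f j i) (hprod : ∀ i ∈ s, 1 ≤ ∏ j ∈ t, f j i) :
    (#s : ℝ) ^ #t ≤ ∏ j ∈ t, ∑ i ∈ s, f j i := by
  rcases t.eq_empty_or_nonempty with rfl | ht
  · simp
  have hcard : (0 : ℝ) < #t := by exact_mod_cast ht.card_pos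
  have hsum : ∀ j ∈ t, 0 ≤ ∑ i ∈ s, f j i := fun j hj => sum_nonneg (hf j hj)
  have hroot : (#s : ℝ) ≤ (∏ j ∈ t, ∑ i ∈ s, f j i) ^ (#t : ℝ)⁻¹ :=
    calc
      (#s : ℝ) = ∑ i ∈ s, 1 := by simp
      _ ≤ ∑ i ∈ s, ∏ j ∈ t, f j i ^ (#t : ℝ)⁻¹ := sum_le_sum fun i hi => by
        rw [Real.finsetProd_rpow _ _ fun j hj => hf j hj i hi]
        exact Real.one_le_rpow (hprod i hi) (by positivity)
      _ ≤ ∏ j ∈ t, (∑ i ∈ s, f j i) ^ (#t : ℝ)⁻¹ :=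
        sum_prod_rpow_le_prod_sum_rpow hf (fun _ _ => by positivity) (by simp [hcard.ne'])
      _ = (∏ j ∈ t, ∑ i ∈ s, f j i) ^ (#t : ℝ)⁻¹ := Real.finsetProd_rpow _ _ hsum _
  rwa [Real.le_rpow_inv_iff_of_pos (by positivity) (prod_nonneg hsum) hcard,
    Real.rpow_natCast] at hroot

theorem sum_div_card_fiber_eq_sum_image {K : Type*} [DivisionRing K] [CharZero K] [DecidableEq κ]
    (s : Finset ι) (p : ι → κ) (g : κ → K) :
    ∑ i ∈ s, g (p i) / #{j ∈ s | p j = p i} = ∑ k ∈ s.image p, g k := by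
  rw [sum_comp (fun k => g k / #{j ∈ s | p j = k}) p]
  refine sum_congr rfl fun k hk => ?_
  have hfiber : (#{j ∈ s | p j = k} : K) ≠ 0 := by
    simpa [filter_eq_empty_iff] using hk
  rw [nsmul_eq_mul, Nat.cast_comm, div_mul_cancel₀ _ hfiber]

theorem l2sqFst_eq_sum_degFst [DecidableEq A] [DecidableEq B] (R : Finset (A × B)) :
    l2sqFst R = ∑ t ∈ R, (degFst R t.1 : ℝ) := by
  rw [sum_comp (fun x => (degFst R x : ℝ)) Prod.fst]
  simp only [l2sqFst, degFst, nsmul_eq_mul, sq]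

theorem l2sqFst_nonneg [DecidableEq A] [DecidableEq B] (R : Finset (A × B)) : 0 ≤ l2sqFst R :=
  sum_nonneg fun _ _ => sq_nonneg _

/-- The weight of `q ∈ Q` over its image `p q` in the relation `R`: the degree of `(p q).1` in `R`,
shared equally among the elements of `Q` with the same image. -/
noncomputable def fiberWeight [DecidableEq A] [DecidableEq B] (Q : Finset ι) (R : Finset (A × B))
    (p : ι → A × B) (q : ι) : ℝ :=
  degFst R (p q).1 / #{r ∈ Q | p r = p q}

theorem fiberWeight_nonneg [DecidableEq A] [DecidableEq B] (Q : Finset ι) (R : Finset (A × B))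
    (p : ι → A × B) (q : ι) : 0 ≤ fiberWeight Q R p q := by
  unfold fiberWeight
  positivity

theorem sum_fiberWeight_le_l2sqFst [DecidableEq A] [DecidableEq B] {Q : Finset ι}
    {R : Finset (A × B)} {p : ι → A × B} (hp : ∀ q ∈ Q, p q ∈ R) :
    ∑ q ∈ Q, fiberWeight Q R p q ≤ l2sqFst R := by
  rw [l2sqFst_eq_sum_degFst]
  calc
    ∑ q ∈ Q, fiberWeight Q R p q = ∑ t ∈ Q.image p, (degFst R t.1 : ℝ) :=
      sum_div_card_fiber_eq_sum_image Q p fun t => (degFst R t.1 : ℝ)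
    _ ≤ ∑ t ∈ R, (degFst R t.1 : ℝ) :=
      sum_le_sum_of_subset_of_nonneg (image_subset_iff.2 hp) fun _ _ _ => Nat.cast_nonneg _

theorem card_fiber_le_degFst [DecidableEq A] [DecidableEq B] [DecidableEq C] {Q : Finset ι}
    {S : Finset (B × C)} {a : ι → A} {b : ι → B} {c : ι → C} (hS : ∀ q ∈ Q, (b q, c q) ∈ S)
    (hinj : Set.InjOn (fun q => (a q, b q, c q)) Q) (q : ι) :
    #{r ∈ Q | (a r, b r) = (a q, b q)} ≤ degFst S (b q) := by
  refine card_le_card_of_injOn (fun r => (b r, c r)) ?_ ?_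
  · intro r hr
    simp only [coe_filter, Set.mem_ofPred_eq, Prod.mk.injEq] at hr
    simpa [hr.2.2] using hS r hr.1
  · intro r hr r' hr' h
    simp only [coe_filter, Set.mem_ofPred_eq, Prod.mk.injEq] at hr hr' h
    exact hinj hr.1 hr'.1 (by simp [hr.2.1, hr'.2.1, h])

theorem one_le_fiberWeight_mul [DecidableEq A] [DecidableEq B] [DecidableEq C] {Q : Finset ι}
    {R : Finset (A × B)} {S : Finset (B × C)} {T : Finset (C × A)}
    {a : ι → A} {b : ι → B} {c : ι → C} (hR : ∀ q ∈ Q, (a q, b q) ∈ R)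
    (hS : ∀ q ∈ Q, (b q, c q) ∈ S) (hT : ∀ q ∈ Q, (c q, a q) ∈ T)
    (hinj : Set.InjOn (fun q => (a q, b q, c q)) Q) {q : ι} (hq : q ∈ Q) :
    1 ≤ fiberWeight Q R (fun q => (a q, b q)) q * fiberWeight Q S (fun q => (b q, c q)) q *
      fiberWeight Q T (fun q => (c q, a q)) q := by
  have hinj_bca : Set.InjOn (fun q => (b q, c q, a q)) Q := fun r hr r' hr' h =>
    hinj hr hr' (by simp_all)
  have hinj_cab : Set.InjOn (fun q => (c q, a q, b q)) Q := fun r hr r' hr' h =>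
    hinj hr hr' (by simp_all)
  have hfiber_R : #{r ∈ Q | (a r, b r) = (a q, b q)} ≤ degFst S (b q) :=
    card_fiber_le_degFst hS hinj q
  have hfiber_S : #{r ∈ Q | (b r, c r) = (b q, c q)} ≤ degFst T (c q) :=
    card_fiber_le_degFst hT hinj_bca q
  have hfiber_T : #{r ∈ Q | (c r, a r) = (c q, a q)} ≤ degFst R (a q) :=
    card_fiber_le_degFst hR hinj_cab q
  have hpos_R : 0 < #{r ∈ Q | (a r, b r) = (a q, b q)} := card_pos.2 ⟨q, by simp [hq]⟩
  have hpos_S : 0 < #{r ∈ Q | (b r, c r) = (b q, c q)} := card_pos.2 ⟨q, by simp [hq]⟩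
  have hpos_T : 0 < #{r ∈ Q | (c r, a r) = (c q, a q)} := card_pos.2 ⟨q, by simp [hq]⟩
  simp only [fiberWeight]
  rw [div_mul_div_comm, div_mul_div_comm, one_le_div (by positivity), mul_rotate, mul_rotate]
  gcongr

theorem card_pow_three_le_l2sqFst_mul [DecidableEq A] [DecidableEq B] [DecidableEq C]
    {Q : Finset ι} {R : Finset (A × B)} {S : Finset (B × C)} {T : Finset (C × A)}
    {a : ι → A} {b : ι → B} {c : ι → C} (hR : ∀ q ∈ Q, (a q, b q) ∈ R)
    (hS : ∀ q ∈ Q, (b q, c q) ∈ S) (hT : ∀ q ∈ Q, (c q, a q) ∈ T)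
    (hinj : Set.InjOn (fun q => (a q, b q, c q)) Q) :
    (#Q : ℝ) ^ 3 ≤ l2sqFst R * l2sqFst S * l2sqFst T := by
  let wR := fiberWeight Q R fun q => (a q, b q)
  let wS := fiberWeight Q S fun q => (b q, c q)
  let wT := fiberWeight Q T fun q => (c q, a q)
  have hwR : 0 ≤ wR := fiberWeight_nonneg Q R _
  have hwS : 0 ≤ wS := fiberWeight_nonneg Q S _
  have hwT : 0 ≤ wT := fiberWeight_nonneg Q T _
  have hprod : ∀ q ∈ Q, 1 ≤ wR q * wS q * wT q := fun _ => one_le_fiberWeight_mul hR hS hT hinj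
  calc
    (#Q : ℝ) ^ 3 ≤ (∑ q ∈ Q, wR q) * (∑ q ∈ Q, wS q) * ∑ q ∈ Q, wT q := by
      simpa [Fin.prod_univ_three] using
        card_pow_card_le_prod_sum (s := Q) (t := univ) (f := ![wR, wS, wT])
          (by simpa [Fin.forall_fin_succ] using
            ⟨fun q _ => hwR q, fun q _ => hwS q, fun q _ => hwT q⟩)
          (by simpa [Fin.prod_univ_three] using hprod)
    _ ≤ l2sqFst R * l2sqFst S * l2sqFst T := by
      have hsum_S : 0 ≤ ∑ q ∈ Q, wS q := sum_nonneg fun q _ => hwS q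
      have hsum_T : 0 ≤ ∑ q ∈ Q, wT q := sum_nonneg fun q _ => hwT q
      have hR_nonneg := l2sqFst_nonneg R
      have hS_nonneg := l2sqFst_nonneg S
      gcongr
      exacts [sum_fiberWeight_le_l2sqFst hR, sum_fiberWeight_le_l2sqFst hS,
        sum_fiberWeight_le_l2sqFst hT]

theorem mem_triangleJoin [DecidableEq A] [DecidableEq B] [DecidableEq C] {R : Finset (A × B)}
    {S : Finset (B × C)} {T : Finset (C × A)} {q : A × B × C} :
    q ∈ triangleJoin R S T ↔ (q.1, q.2.1) ∈ R ∧ (q.2.1, q.2.2) ∈ S ∧ (q.2.2, q.1) ∈ T := by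
  obtain ⟨x, y, z⟩ := q
  simp only [triangleJoin, mem_filter, mem_image, mem_product, Prod.exists, Prod.mk.injEq]
  constructor
  · rintro ⟨⟨_, _, _, _, ⟨⟨hR, hS⟩, rfl⟩, rfl, rfl, rfl⟩, hT⟩
    exact ⟨hR, hS, hT⟩
  · rintro ⟨hR, hS, hT⟩
    exact ⟨⟨x, y, y, z, ⟨⟨hR, hS⟩, rfl⟩, rfl, rfl, rfl⟩, hT⟩

end

/-- **triangle join, `ℓ_2` bound.**
`|Q|³ ≤ ‖deg_R(Y|X)‖_2² · ‖deg_S(Z|Y)‖_2² · ‖deg_T(X|Z)‖_2²`, i.e.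
`|Q| ≤ (‖deg_R(Y|X)‖_2² · ‖deg_S(Z|Y)‖_2² · ‖deg_T(X|Z)‖_2²)^{1/3}`. -/
theorem triangle_join_l2_bound {α β γ : Type*} [DecidableEq α] [DecidableEq β] [DecidableEq γ]
    (R : Finset (α × β)) (S : Finset (β × γ)) (T : Finset (γ × α)) :
    ((triangleJoin R S T).card : ℝ) ^ 3 ≤ l2sqFst R * l2sqFst S * l2sqFst T ∧
    ((triangleJoin R S T).card : ℝ)
      ≤ (l2sqFst R * l2sqFst S * l2sqFst T) ^ ((1 : ℝ) / 3) := by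
  have hcube : ((triangleJoin R S T).card : ℝ) ^ 3 ≤ l2sqFst R * l2sqFst S * l2sqFst T :=
    card_pow_three_le_l2sqFst_mul
      (fun _ hq => (mem_triangleJoin.1 hq).1) (fun _ hq => (mem_triangleJoin.1 hq).2.1)
      (fun _ hq => (mem_triangleJoin.1 hq).2.2) Function.injective_id.injOn
  refine ⟨hcube, ?_⟩
  have hbound : 0 ≤ l2sqFst R * l2sqFst S * l2sqFst T :=
    mul_nonneg (mul_nonneg (l2sqFst_nonneg R) (l2sqFst_nonneg S)) (l2sqFst_nonneg T)
  rw [one_div, Real.le_rpow_inv_iff_of_pos (by positivity) hbound (by norm_num)]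
  exact_mod_cast hcube

end JoinBounds
end

section
/- There exist a full conjunctive query Q(X) = ⋀_{j∈[m]} R_j(Y_j) over a set X of n = 4 variables, a set of abstract statistics Σ = {τ_1, …, τ_s} over X with each τ_i = ((V_i|U_i), p_i) guarded by some atom R_{j_i} of Q (i.e. U_i ∪ V_i ⊆ Y_{j_i}), and log-statistics b ∈ ℝ^s with b_i > 0, such that for every integer k ≥ 1 and every database instance D = (R_1^D, …, R_m^D) satisfying the k-amplified statistics (i.e. ||deg_{R_{j_i}^D}(V_i|U_i)||_{p_i} ≤ 2^{k·b_i} for all i ∈ [s]), one has log₂ |Q(D)| ≤ (35/36) · Log-L-Bound_{Γ_n}(Σ, k·b). -/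
open scoped BigOperators ENNReal

namespace JoinBounds

noncomputable section

variable {A α : Type*}

/-- The projection of a tuple `t : A → α` onto the attribute set `U`, represented as a
partial tuple. -/
def proj [DecidableEq A] (U : Finset A) (t : A → α) : A → Option α :=
  fun x => if x ∈ U then some (t x) else none

/-- The projection of a relation `R` onto the attribute set `U`. -/
def projR [Fintype A] [DecidableEq A] [DecidableEq α] (U : Finset A) (R : Finset (A → α)) :
    Finset (A → Option α) :=
  R.image (proj U)

/-- The degree of a `U`-tuple `u` in `R`: the number of distinct `V`-tuples
appearing in `R` together with `u`. -/
def deg [Fintype A] [DecidableEq A] [DecidableEq α] (U V : Finset A) (R : Finset (A → α))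
    (u : A → Option α) : ℕ :=
  (projR V (R.filter fun t => proj U t = u)).card

/-- The `ℓ_p`-norm of the degree sequence `deg_R(V|U)`, for `p ∈ (0, ∞]`. -/
def lpNorm [Fintype A] [DecidableEq A] [DecidableEq α] (U V : Finset A) (R : Finset (A → α))
    (p : ℝ≥0∞) : ℝ :=
  if p = ⊤ then (((projR U R).sup fun u => deg U V R u : ℕ) : ℝ)
  else (∑ u ∈ projR U R, (deg U V R u : ℝ) ^ p.toReal) ^ (1 / p.toReal)

/-- The marginal probability, on the attribute set `W`, of the partial tuple `w`, under a
probability distribution `P` on the tuples of `R`. -/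
def marg [Fintype A] [DecidableEq A] [DecidableEq α] (P : (A → α) → ℝ) (R : Finset (A → α))
    (W : Finset A) (w : A → Option α) : ℝ :=
  ∑ t ∈ R.filter fun t => proj W t = w, P t

/-- The (base-2 Shannon) entropy of the marginal on the attribute set `W` of the
distribution `P` on the tuples of `R`: this is the entropic vector `h(W)`. -/
def entropy [Fintype A] [DecidableEq A] [DecidableEq α] (P : (A → α) → ℝ) (R : Finset (A → α))
    (W : Finset A) : ℝ :=
  -∑ w ∈ projR W R, marg P R W w * Real.logb 2 (marg P R W w)

noncomputable section

variable {A : Type*}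

/-- `h(τ)` for the abstract statistics `τ = ((V|U), p)`:
`(1/p)·h(U) + h(V|U)` where `h(V|U) = h(U ∪ V) - h(U)` and `1/∞ = 0`. -/
def statVal [DecidableEq A] (h : Finset A → ℝ) (U V : Finset A) (p : ℝ≥0∞) : ℝ :=
  (1 / p).toReal * h U + (h (U ∪ V) - h U)

/-- A polymatroid on the variable set `A`. -/
def IsPolymatroid [DecidableEq A] (h : Finset A → ℝ) : Prop :=
  h ∅ = 0 ∧ (∀ U V : Finset A, U ⊆ V → h U ≤ h V) ∧
    ∀ U V : Finset A, h U + h V ≥ h (U ∪ V) + h (U ∩ V)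

/-- The set `Γ_n` of polymatroids. -/
def Gamma (A : Type*) [DecidableEq A] : Set (Finset A → ℝ) := {h | IsPolymatroid h}

/-- The step function `h^W`. -/
def stepFn [DecidableEq A] (W : Finset A) : Finset A → ℝ :=
  fun U => if (U ∩ W).Nonempty then 1 else 0

/-- The set `N_n` of normal polymatroids: nonnegative linear combinations of step functions. -/
def Normal (A : Type*) [Fintype A] [DecidableEq A] : Set (Finset A → ℝ) :=
  {h | ∃ α : Finset A → ℝ, (∀ W, 0 ≤ α W) ∧ h = ∑ W : Finset A, α W • stepFn W}

/-- `Log-U-Bound_K(Σ, b)`: the infimum of `∑ i, w i * b i` over all nonnegative `w` such that the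
`Σ`-inequality `∑ i, w i * h(τ i) ≥ h(X)` is valid for all `h ∈ K` (an `EReal`; `⊤` if no valid
inequality exists). -/
def LogUBound [Fintype A] [DecidableEq A] (K : Set (Finset A → ℝ)) (s : ℕ)
    (U V : Fin s → Finset A) (p : Fin s → ℝ≥0∞) (b : Fin s → ℝ) : EReal :=
  sInf {r : EReal | ∃ w : Fin s → ℝ, (∀ i, 0 ≤ w i) ∧
    (∀ h ∈ K, ∑ i, w i * statVal h (U i) (V i) (p i) ≥ h Finset.univ) ∧
    r = ((∑ i, w i * b i : ℝ) : EReal)}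

/-- `Log-L-Bound_K(Σ, b)`: the supremum of `h(X)` over all `h ∈ K` satisfying the
log-statistics `h(τ i) ≤ b i` (an `EReal`). -/
def LogLBound [Fintype A] [DecidableEq A] (K : Set (Finset A → ℝ)) (s : ℕ)
    (U V : Fin s → Finset A) (p : Fin s → ℝ≥0∞) (b : Fin s → ℝ) : EReal :=
  sSup {r : EReal | ∃ h ∈ K, (∀ i, statVal h (U i) (V i) (p i) ≤ b i) ∧
    r = ((h Finset.univ : ℝ) : EReal)}

end

/-!
The Zhang–Yeung inequality holds for every entropic vector but fails for the polymatroid `zyRank`.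
It follows from the elemental Shannon inequalities once an independent copy of `Z` over `(X, Y)`
is adjoined, and such a copy exists for random variables but not in a general polymatroid.

Degree statistics are chosen to be tight on `zyRank`, whose total rank is `4`, so that `4 k` is a
lower bound for the polymatroid bound. The entropy `h` of the uniform distribution on the output
satisfies the same statistics, because Gibbs' inequality gives `h(τ) ≤ log₂ ‖deg(V|U)‖_p`.
Eliminating every other term of the Zhang–Yeung inequality through the statistics leaves
`9 h(X) ≤ 35 k`, where `h(X)` is the logarithm of the output size, and
`35 / 9 = (35 / 36) * 4`.
-/

/-! ### Shannon entropy of a random variable with finite support -/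

section ShannonEntropy

variable {Ω β δ : Type*} [DecidableEq β] [DecidableEq δ] {S : Finset Ω} {w : Ω → ℝ}

/-- `w` is a probability distribution with support `S`; its values outside `S` are ignored. -/
structure IsDistribution (S : Finset Ω) (w : Ω → ℝ) : Prop where
  pos : ∀ s ∈ S, 0 < w s
  sum_eq_one : ∑ s ∈ S, w s = 1

/-- The probability that the random variable `f` takes the value `y`. For a relation `R`,
`marg P R W` is `fiberMass R P (proj W)` by definition. -/
def fiberMass (S : Finset Ω) (w : Ω → ℝ) (f : Ω → β) (y : β) : ℝ :=
  ∑ s ∈ S with f s = y, w s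

/-- The base-2 Shannon entropy of the random variable `f`. For a relation `R`, `entropy P R W`
is `shannonEntropy R P (proj W)` by definition. -/
def shannonEntropy (S : Finset Ω) (w : Ω → ℝ) (f : Ω → β) : ℝ :=
  -∑ y ∈ S.image f, fiberMass S w f y * Real.logb 2 (fiberMass S w f y)

theorem sum_fiberMass_mul (f : Ω → β) (F : β → ℝ) :
    ∑ y ∈ S.image f, fiberMass S w f y * F y = ∑ s ∈ S, w s * F (f s) := by
  rw [← Finset.sum_fiberwise_of_maps_to fun s hs => Finset.mem_image_of_mem f hs]
  refine Finset.sum_congr rfl fun y _ => ?_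
  rw [fiberMass, Finset.sum_mul]
  refine Finset.sum_congr rfl fun s hs => ?_
  rw [(Finset.mem_filter.1 hs).2]

theorem shannonEntropy_eq_neg_sum (f : Ω → β) :
    shannonEntropy S w f = -∑ s ∈ S, w s * Real.logb 2 (fiberMass S w f (f s)) := by
  rw [shannonEntropy, sum_fiberMass_mul f fun y => Real.logb 2 (fiberMass S w f y)]

theorem shannonEntropy_congr {f : Ω → β} {g : Ω → δ}
    (h : ∀ s ∈ S, ∀ t ∈ S, f s = f t ↔ g s = g t) :
    shannonEntropy S w f = shannonEntropy S w g := by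
  rw [shannonEntropy_eq_neg_sum, shannonEntropy_eq_neg_sum]
  congr 1
  refine Finset.sum_congr rfl fun t ht => ?_
  rw [fiberMass, fiberMass, Finset.filter_congr fun s hs => h s hs t ht]

theorem shannonEntropy_comp {Ω' : Type*} {S' : Finset Ω'} {w' : Ω' → ℝ} {e : Ω' → Ω}
    (he : ∀ F : Ω → ℝ, ∑ z ∈ S', w' z * F (e z) = ∑ s ∈ S, w s * F s) (f : Ω → β) :
    shannonEntropy S' w' (fun z => f (e z)) = shannonEntropy S w f := by
  have marginal : ∀ y, fiberMass S' w' (fun z => f (e z)) y = fiberMass S w f y := fun y => by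
    simpa [fiberMass, Finset.sum_filter] using he fun s => if f s = y then 1 else 0
  simp only [shannonEntropy_eq_neg_sum, marginal]
  rw [he fun s => Real.logb 2 (fiberMass S w f (f s))]

namespace IsDistribution

theorem nonempty (hw : IsDistribution S w) : S.Nonempty :=
  Finset.nonempty_of_sum_ne_zero (hw.sum_eq_one.trans_ne one_ne_zero)

theorem fiberMass_pos (hw : IsDistribution S w) (f : Ω → β) {t : Ω} (ht : t ∈ S) :
    0 < fiberMass S w f (f t) :=
  Finset.sum_pos (fun s hs => hw.pos s (Finset.mem_of_mem_filter s hs))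
    ⟨t, Finset.mem_filter.2 ⟨ht, rfl⟩⟩

theorem sum_fiberMass_le_one (hw : IsDistribution S w) (f : Ω → β) (T : Finset β) :
    ∑ y ∈ T, fiberMass S w f y ≤ 1 := by
  simp only [fiberMass, Finset.sum_fiberwise_eq_sum_filter]
  rw [← hw.sum_eq_one]
  exact Finset.sum_le_sum_of_subset_of_nonneg (Finset.filter_subset _ _)
    fun s hs _ => (hw.pos s hs).le

theorem shannonEntropy_mono (hw : IsDistribution S w) {f : Ω → β} {g : Ω → δ}
    (hgf : g.FactorsThrough f) : shannonEntropy S w g ≤ shannonEntropy S w f := by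
  rw [shannonEntropy_eq_neg_sum, shannonEntropy_eq_neg_sum, neg_le_neg_iff]
  refine Finset.sum_le_sum fun t ht => mul_le_mul_of_nonneg_left ?_ (hw.pos t ht).le
  refine Real.logb_le_logb_of_le one_lt_two (hw.fiberMass_pos f ht) ?_
  refine Finset.sum_le_sum_of_subset_of_nonneg ?_
    fun s hs _ => (hw.pos s (Finset.mem_of_mem_filter s hs)).le
  exact Finset.monotone_filter_right S fun _ _ h => hgf h

theorem sum_mul_logb_le_logb_sum (hw : IsDistribution S w) {x : Ω → ℝ} (hx : ∀ s ∈ S, 0 < x s) :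
    ∑ s ∈ S, w s * Real.logb 2 (x s) ≤ Real.logb 2 (∑ s ∈ S, w s * x s) := by
  have jensen := strictConcaveOn_log_Ioi.concaveOn.le_map_sum (fun s hs => (hw.pos s hs).le)
    hw.sum_eq_one hx
  simp only [smul_eq_mul] at jensen
  simp only [Real.logb, ← mul_div_assoc, ← Finset.sum_div]
  exact div_le_div_of_nonneg_right jensen (Real.log_nonneg one_le_two)

/-- The Gibbs variational inequality. -/
theorem sum_mul_logb_add_shannonEntropy_le (hw : IsDistribution S w) (f : Ω → β) {q : β → ℝ}
    (hq : ∀ s ∈ S, 0 < q (f s)) :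
    ∑ s ∈ S, w s * Real.logb 2 (q (f s)) + shannonEntropy S w f ≤
      Real.logb 2 (∑ y ∈ S.image f, q y) := by
  have hm : ∀ s ∈ S, 0 < fiberMass S w f (f s) := fun s hs => hw.fiberMass_pos f hs
  calc ∑ s ∈ S, w s * Real.logb 2 (q (f s)) + shannonEntropy S w f
      = ∑ s ∈ S, w s * Real.logb 2 (q (f s) / fiberMass S w f (f s)) := by
        rw [shannonEntropy_eq_neg_sum, ← sub_eq_add_neg, ← Finset.sum_sub_distrib]
        refine Finset.sum_congr rfl fun s hs => ?_
        rw [Real.logb_div (hq s hs).ne' (hm s hs).ne', mul_sub]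
    _ ≤ Real.logb 2 (∑ s ∈ S, w s * (q (f s) / fiberMass S w f (f s))) :=
        hw.sum_mul_logb_le_logb_sum fun s hs => div_pos (hq s hs) (hm s hs)
    _ = Real.logb 2 (∑ y ∈ S.image f, q y) := by
        rw [← sum_fiberMass_mul f fun y => q y / fiberMass S w f y]
        congr 1
        refine Finset.sum_congr rfl fun y hy => ?_
        obtain ⟨s, hs, rfl⟩ := Finset.mem_image.1 hy
        exact mul_div_cancel₀ _ (hm s hs).ne'

end IsDistribution

theorem isDistribution_uniform (hS : S.Nonempty) : IsDistribution S fun _ => (S.card : ℝ)⁻¹ where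
  pos _ _ := inv_pos.2 (Nat.cast_pos.2 hS.card_pos)
  sum_eq_one := by
    rw [Finset.sum_const, nsmul_eq_mul, mul_inv_cancel₀ (Nat.cast_ne_zero.2 hS.card_ne_zero)]

theorem shannonEntropy_uniform_of_injective (hS : S.Nonempty) {f : Ω → β}
    (hf : f.Injective) :
    shannonEntropy S (fun _ => (S.card : ℝ)⁻¹) f = Real.logb 2 S.card := by
  have fiber : ∀ t ∈ S, fiberMass S (fun _ => (S.card : ℝ)⁻¹) f (f t) = (S.card : ℝ)⁻¹ := by
    intro t ht
    have fiber_eq : {s ∈ S | f s = f t} = {t} := by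
      ext s
      simp only [Finset.mem_filter, hf.eq_iff, Finset.mem_singleton, and_iff_right_iff_imp]
      rintro rfl
      exact ht
    rw [fiberMass, fiber_eq, Finset.sum_singleton]
  rw [shannonEntropy_eq_neg_sum, Finset.sum_congr rfl fun t ht => by rw [fiber t ht],
    ← Finset.sum_mul, (isDistribution_uniform hS).sum_eq_one, Real.logb_inv, one_mul, neg_neg]

end ShannonEntropy

/-! ### Conditionally independent coupling -/

section Coupling

variable {Ω β δ ε : Type*} [DecidableEq β] [DecidableEq δ] [DecidableEq ε]
  {S : Finset Ω} {w : Ω → ℝ}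

/-- The support of the coupling of two copies of a random point of `S` that are conditionally
independent given that they have the same image under `g`. -/
def couplingSupport (S : Finset Ω) (g : Ω → β) : Finset (Ω × Ω) :=
  {z ∈ S ×ˢ S | g z.1 = g z.2}

/-- The weights of the coupling of two copies of a random point of `S` that are conditionally
independent given that they have the same image under `g`. -/
def couplingWeight (S : Finset Ω) (w : Ω → ℝ) (g : Ω → β) (z : Ω × Ω) : ℝ :=
  w z.1 * w z.2 / fiberMass S w g (g z.1)

theorem mem_couplingSupport {g : Ω → β} {z : Ω × Ω} :
    z ∈ couplingSupport S g ↔ z.1 ∈ S ∧ z.2 ∈ S ∧ g z.1 = g z.2 := by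
  rw [couplingSupport, Finset.mem_filter, Finset.mem_product, and_assoc]

theorem sum_coupling_swap (g : Ω → β) (F : Ω × Ω → ℝ) :
    ∑ z ∈ couplingSupport S g, couplingWeight S w g z * F z.swap =
      ∑ z ∈ couplingSupport S g, couplingWeight S w g z * F z := by
  have swap_mem : ∀ z ∈ couplingSupport S g, z.swap ∈ couplingSupport S g := fun z hz =>
    have ⟨h₁, h₂, h⟩ := mem_couplingSupport.1 hz
    mem_couplingSupport.2 ⟨h₂, h₁, h.symm⟩
  refine Finset.sum_bij' (fun z _ => z.swap) (fun z _ => z.swap) swap_mem swap_mem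
    (fun _ _ => rfl) (fun _ _ => rfl) fun z hz => ?_
  obtain ⟨-, -, h⟩ := mem_couplingSupport.1 hz
  simp only [couplingWeight, Prod.fst_swap, Prod.snd_swap, h, mul_comm (w z.1)]

theorem fiberMass_coupling_prodMk {f : Ω → δ} {h : Ω → ε} {g : Ω → β} (hf : g.FactorsThrough f)
    (hh : g.FactorsThrough h) {s t : Ω} (hst : g s = g t) :
    fiberMass (couplingSupport S g) (couplingWeight S w g) (fun z => (f z.1, h z.2)) (f s, h t) =
      fiberMass S w f (f s) * fiberMass S w h (h t) / fiberMass S w g (g s) := by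
  have rectangle : {z ∈ couplingSupport S g | (f z.1, h z.2) = (f s, h t)} =
      {x ∈ S | f x = f s} ×ˢ {y ∈ S | h y = h t} := by
    ext ⟨x, y⟩
    simp only [Finset.mem_filter, mem_couplingSupport, Finset.mem_product, Prod.mk.injEq]
    refine ⟨fun ⟨⟨hx, hy, _⟩, hfx, hhy⟩ => ⟨⟨hx, hfx⟩, hy, hhy⟩, fun ⟨⟨hx, hfx⟩, hy, hhy⟩ => ?_⟩
    exact ⟨⟨hx, hy, (hf hfx).trans (hst.trans (hh hhy).symm)⟩, hfx, hhy⟩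
  rw [fiberMass, rectangle, fiberMass, fiberMass, Finset.sum_mul_sum, Finset.sum_div,
    Finset.sum_product]
  refine Finset.sum_congr rfl fun x hx => ?_
  rw [Finset.sum_div]
  simp only [couplingWeight, hf (Finset.mem_filter.1 hx).2]

namespace IsDistribution

theorem sum_coupling_fst (hw : IsDistribution S w) (g : Ω → β) (F : Ω → ℝ) :
    ∑ z ∈ couplingSupport S g, couplingWeight S w g z * F z.1 = ∑ s ∈ S, w s * F s := by
  rw [couplingSupport, Finset.sum_filter, Finset.sum_product]
  refine Finset.sum_congr rfl fun s hs => ?_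
  calc ∑ t ∈ S, (if g s = g t then couplingWeight S w g (s, t) * F s else 0)
      = ∑ t ∈ S with g t = g s, w t * (w s * F s / fiberMass S w g (g s)) := by
        rw [← Finset.sum_filter]
        simp only [eq_comm (a := g s), couplingWeight]
        exact Finset.sum_congr rfl fun t _ => by ring
    _ = fiberMass S w g (g s) * (w s * F s / fiberMass S w g (g s)) := by
        rw [← Finset.sum_mul, fiberMass]
    _ = w s * F s := mul_div_cancel₀ _ (hw.fiberMass_pos g hs).ne'

theorem sum_coupling_snd (hw : IsDistribution S w) (g : Ω → β) (F : Ω → ℝ) :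
    ∑ z ∈ couplingSupport S g, couplingWeight S w g z * F z.2 = ∑ s ∈ S, w s * F s :=
  (sum_coupling_swap g fun z => F z.1).trans (hw.sum_coupling_fst g F)

theorem coupling (hw : IsDistribution S w) (g : Ω → β) :
    IsDistribution (couplingSupport S g) (couplingWeight S w g) where
  pos z hz := by
    obtain ⟨h₁, h₂, -⟩ := mem_couplingSupport.1 hz
    exact div_pos (mul_pos (hw.pos _ h₁) (hw.pos _ h₂)) (hw.fiberMass_pos g h₁)
  sum_eq_one := by simpa [hw.sum_eq_one] using hw.sum_coupling_fst g fun _ => 1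

theorem shannonEntropy_coupling_fst (hw : IsDistribution S w) (g : Ω → β) (f : Ω → δ) :
    shannonEntropy (couplingSupport S g) (couplingWeight S w g) (fun z => f z.1) =
      shannonEntropy S w f :=
  shannonEntropy_comp (hw.sum_coupling_fst g) f

theorem shannonEntropy_coupling_snd (hw : IsDistribution S w) (g : Ω → β) (f : Ω → δ) :
    shannonEntropy (couplingSupport S g) (couplingWeight S w g) (fun z => f z.2) =
      shannonEntropy S w f :=
  shannonEntropy_comp (hw.sum_coupling_snd g) f

theorem logb_fiberMass_coupling_prodMk (hw : IsDistribution S w) {f : Ω → δ} {h : Ω → ε}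
    {g : Ω → β} (hf : g.FactorsThrough f) (hh : g.FactorsThrough h) {s t : Ω} (hs : s ∈ S)
    (ht : t ∈ S) (hst : g s = g t) :
    Real.logb 2 (fiberMass (couplingSupport S g) (couplingWeight S w g)
      (fun z => (f z.1, h z.2)) (f s, h t)) =
    Real.logb 2 (fiberMass S w f (f s)) + Real.logb 2 (fiberMass S w h (h t)) -
      Real.logb 2 (fiberMass S w g (g s)) := by
  have hfs := (hw.fiberMass_pos f hs).ne'
  have hht := (hw.fiberMass_pos h ht).ne'
  rw [fiberMass_coupling_prodMk hf hh hst, Real.logb_div (mul_ne_zero hfs hht)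
    (hw.fiberMass_pos g hs).ne', Real.logb_mul hfs hht]

theorem shannonEntropy_coupling_prodMk (hw : IsDistribution S w) {f : Ω → δ} {h : Ω → ε}
    {g : Ω → β} (hf : g.FactorsThrough f) (hh : g.FactorsThrough h) :
    shannonEntropy (couplingSupport S g) (couplingWeight S w g) (fun z => (f z.1, h z.2)) =
      shannonEntropy S w f + shannonEntropy S w h - shannonEntropy S w g := by
  simp only [shannonEntropy_eq_neg_sum]
  rw [← hw.sum_coupling_fst g fun s => Real.logb 2 (fiberMass S w f (f s)),
    ← hw.sum_coupling_snd g fun s => Real.logb 2 (fiberMass S w h (h s)),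
    ← hw.sum_coupling_fst g fun s => Real.logb 2 (fiberMass S w g (g s)),
    ← neg_add, sub_neg_eq_add, neg_add_eq_sub, ← neg_sub, neg_inj,
    ← Finset.sum_add_distrib, ← Finset.sum_sub_distrib]
  refine Finset.sum_congr rfl fun z hz => ?_
  obtain ⟨h₁, h₂, hz⟩ := mem_couplingSupport.1 hz
  rw [hw.logb_fiberMass_coupling_prodMk hf hh h₁ h₂ hz]
  ring

/-- Gibbs' inequality for the joint law of `(f, h)` against the law it would have if `f` and `h`
were conditionally independent given `g`. -/
theorem shannonEntropy_prodMk_add_le (hw : IsDistribution S w) {f : Ω → δ} {h : Ω → ε}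
    {g : Ω → β} (hf : g.FactorsThrough f) (hh : g.FactorsThrough h) :
    shannonEntropy S w (fun s => (f s, h s)) + shannonEntropy S w g ≤
      shannonEntropy S w f + shannonEntropy S w h := by
  let q := fiberMass (couplingSupport S g) (couplingWeight S w g) fun z => (f z.1, h z.2)
  have q_pos : ∀ s ∈ S, 0 < q (f s, h s) := fun s hs =>
    (hw.coupling g).fiberMass_pos _ (mem_couplingSupport.2 ⟨hs, hs, rfl⟩ : (s, s) ∈ _)
  have gibbs := hw.sum_mul_logb_add_shannonEntropy_le (fun s => (f s, h s)) q_pos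
  have sum_logb_q : ∑ s ∈ S, w s * Real.logb 2 (q (f s, h s)) =
      shannonEntropy S w g - shannonEntropy S w f - shannonEntropy S w h := by
    simp only [shannonEntropy_eq_neg_sum, sub_neg_eq_add, neg_add_eq_sub]
    rw [← Finset.sum_sub_distrib, ← Finset.sum_add_distrib]
    refine Finset.sum_congr rfl fun s hs => ?_
    rw [hw.logb_fiberMass_coupling_prodMk hf hh hs hs rfl]
    ring
  have q_sum_nonneg : 0 ≤ ∑ y ∈ S.image fun s => (f s, h s), q y :=
    Finset.sum_nonneg (Finset.forall_mem_image.2 fun s hs => (q_pos s hs).le)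
  have logb_sum_nonpos := Real.logb_nonpos one_lt_two q_sum_nonneg
    ((hw.coupling g).sum_fiberMass_le_one _ (S.image fun s => (f s, h s)))
  linarith

end IsDistribution

end Coupling

/-! ### Polymatroids and conditional mutual information -/

section Polymatroid

variable {A : Type*} [DecidableEq A] {h : Finset A → ℝ}

theorem IsPolymatroid.const_mul (hh : IsPolymatroid h) {c : ℝ} (hc : 0 ≤ c) :
    IsPolymatroid fun W => c * h W := by
  refine ⟨mul_eq_zero_of_right c hh.1, fun U V hUV => mul_le_mul_of_nonneg_left (hh.2.1 U V hUV) hc,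
    fun U V => ?_⟩
  simp only [← mul_add]
  exact mul_le_mul_of_nonneg_left (hh.2.2 U V) hc

theorem statVal_const_mul (c : ℝ) (h : Finset A → ℝ) (U V : Finset A) (p : ℝ≥0∞) :
    statVal (fun W => c * h W) U V p = c * statVal h U V p := by
  simp only [statVal]
  ring

theorem statVal_top (h : Finset A → ℝ) (U V : Finset A) :
    statVal h U V ⊤ = h (U ∪ V) - h U := by
  rw [statVal, ENNReal.div_top, ENNReal.toReal_zero, zero_mul, zero_add]

theorem statVal_one (h : Finset A → ℝ) (U V : Finset A) : statVal h U V 1 = h (U ∪ V) := by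
  rw [statVal, div_one, ENNReal.toReal_one, one_mul, add_sub_cancel]

/-- The conditional entropy `H(X | Z)` of a set function. -/
def condEntropy (h : Finset A → ℝ) (X Z : Finset A) : ℝ :=
  h (X ∪ Z) - h Z

theorem IsPolymatroid.condEntropy_anti (hh : IsPolymatroid h) (X : Finset A) {Z T : Finset A}
    (hZT : Z ⊆ T) : condEntropy h X T ≤ condEntropy h X Z := by
  have submodular := hh.2.2 (X ∪ Z) T
  have mono := hh.2.1 Z ((X ∪ Z) ∩ T) (Finset.subset_inter Finset.subset_union_right hZT)
  rw [Finset.union_assoc, Finset.union_eq_right.2 hZT] at submodular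
  simp only [condEntropy]
  linarith

/-- The conditional mutual information `I(X; Y | Z)` of a set function, in the sense of entropy. -/
def condMutualInfo (h : Finset A → ℝ) (X Y Z : Finset A) : ℝ :=
  h (X ∪ Z) + h (Y ∪ Z) - h (X ∪ Y ∪ Z) - h Z

theorem condMutualInfo_eq_condEntropy_sub (h : Finset A → ℝ) (X Y Z : Finset A) :
    condMutualInfo h X Y Z = condEntropy h Y Z - condEntropy h Y (X ∪ Z) := by
  simp only [condMutualInfo, condEntropy, Finset.union_assoc, Finset.union_left_comm Y]
  ring

theorem IsPolymatroid.condMutualInfo_nonneg (hh : IsPolymatroid h) (X Y Z : Finset A) :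
    0 ≤ condMutualInfo h X Y Z := by
  rw [condMutualInfo_eq_condEntropy_sub, sub_nonneg]
  exact hh.condEntropy_anti Y Finset.subset_union_right

theorem condMutualInfo_empty_sub (h : Finset A → ℝ) (X Y C : Finset A) :
    condMutualInfo h X Y ∅ - condMutualInfo h X Y C =
      condEntropy h C ∅ - condEntropy h C X - condEntropy h C Y + condEntropy h C (X ∪ Y) := by
  simp only [condMutualInfo, condEntropy, Finset.union_empty, Finset.empty_union,
    Finset.union_comm C]
  ring

theorem IsPolymatroid.condEntropy_add_le (hh : IsPolymatroid h) (X Y Z C : Finset A) :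
    condEntropy h C Z + condEntropy h C (X ∪ Y ∪ Z) ≤
      condEntropy h C (X ∪ Z) + condEntropy h C (Y ∪ Z) + condMutualInfo h X Y Z := by
  have nonneg := hh.condMutualInfo_nonneg X Y (C ∪ Z)
  simp only [condEntropy, condMutualInfo, Finset.union_left_comm _ C] at nonneg ⊢
  linarith

theorem IsPolymatroid.condMutualInfo_empty_le (hh : IsPolymatroid h) (X Y Z T C : Finset A) :
    condMutualInfo h X Y ∅ ≤
      condMutualInfo h X Y Z + condMutualInfo h X Y T + condMutualInfo h Z T ∅ +
        condMutualInfo h X Y C + condMutualInfo h X C Y + condMutualInfo h Y C X +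
        3 * condMutualInfo h (Z ∪ T) C (X ∪ Y) := by
  have given_empty := hh.condEntropy_add_le Z T ∅ C
  have given_Z := hh.condEntropy_add_le X Y Z C
  have given_T := hh.condEntropy_add_le X Y T C
  have anti_XZ := hh.condEntropy_anti C (Finset.subset_union_left : X ⊆ X ∪ Z)
  have anti_YZ := hh.condEntropy_anti C (Finset.subset_union_left : Y ⊆ Y ∪ Z)
  have anti_XT := hh.condEntropy_anti C (Finset.subset_union_left : X ⊆ X ∪ T)
  have anti_YT := hh.condEntropy_anti C (Finset.subset_union_left : Y ⊆ Y ∪ T)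
  have anti_ZT := hh.condEntropy_anti C (Finset.subset_union_left : Z ∪ T ⊆ Z ∪ T ∪ (X ∪ Y))
  have anti_XYZ := hh.condEntropy_anti C (show X ∪ Y ∪ Z ⊆ Z ∪ T ∪ (X ∪ Y) by grind)
  have anti_XYT := hh.condEntropy_anti C (show X ∪ Y ∪ T ⊆ Z ∪ T ∪ (X ∪ Y) by grind)
  have XY_empty_sub := condMutualInfo_empty_sub h X Y C
  have XC_Y := condMutualInfo_eq_condEntropy_sub h X C Y
  have YC_X := condMutualInfo_eq_condEntropy_sub h Y C X
  have ZTC_XY := condMutualInfo_eq_condEntropy_sub h (Z ∪ T) C (X ∪ Y)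
  simp only [Finset.union_empty] at given_empty
  rw [Finset.union_comm Y X] at YC_X
  linarith

/-- The Zhang–Yeung inequality for the sets `X`, `Y`, `Z`, `T`, written with conditional mutual
informations (`I(X; Y) = I(X; Y | ∅)`). -/
def ZhangYeungInequality (h : Finset A → ℝ) (X Y Z T : Finset A) : Prop :=
  condMutualInfo h X Y ∅ ≤
    2 * condMutualInfo h X Y Z + condMutualInfo h X Y T + condMutualInfo h Z T ∅ +
      condMutualInfo h X Z Y + condMutualInfo h Y Z X

theorem zhangYeungInequality_iff {X Y Z T : Finset A} :
    ZhangYeungInequality h X Y Z T ↔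
      4 * h (X ∪ Y ∪ Z) + h (X ∪ Y ∪ T) + h (Z ∪ T) + h Z + 2 * h X + 2 * h Y ≤
        3 * h (X ∪ Y) + 3 * h (X ∪ Z) + 3 * h (Y ∪ Z) + h (X ∪ T) + h (Y ∪ T) := by
  simp only [ZhangYeungInequality, condMutualInfo, Finset.union_empty, Finset.union_right_comm X Z,
    Finset.union_comm (Y ∪ Z) X, Finset.union_assoc, Finset.union_comm Z Y, Finset.union_comm Z X,
    Finset.union_comm Y X]
  constructor <;> intro zy <;> linarith

/-- `C` is a copy of `Z` over `X ∪ Y`: it is distributed like `Z` jointly with each of `∅`, `X`, `Y`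
and `X ∪ Y`, and it is independent of `Z ∪ T` given `X ∪ Y`. -/
structure IsCopyOver (h : Finset A → ℝ) (X Y Z T C : Finset A) : Prop where
  eq_self : h C = h Z
  eq_left : h (X ∪ C) = h (X ∪ Z)
  eq_right : h (Y ∪ C) = h (Y ∪ Z)
  eq_union : h (X ∪ Y ∪ C) = h (X ∪ Y ∪ Z)
  condIndep : condMutualInfo h (Z ∪ T) C (X ∪ Y) = 0

theorem IsPolymatroid.zhangYeungInequality_of_isCopyOver (hh : IsPolymatroid h)
    {X Y Z T C : Finset A} (hC : IsCopyOver h X Y Z T C) : ZhangYeungInequality h X Y Z T := by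
  have bound := hh.condMutualInfo_empty_le X Y Z T C
  have copy_XY : condMutualInfo h X Y C = condMutualInfo h X Y Z := by
    simp only [condMutualInfo, hC.eq_self, hC.eq_left, hC.eq_right, hC.eq_union]
  have copy_X : condMutualInfo h X C Y = condMutualInfo h X Z Y := by
    simp only [condMutualInfo, Finset.union_right_comm X _ Y, Finset.union_comm C Y,
      Finset.union_comm Z Y, hC.eq_right, hC.eq_union]
  have copy_Y : condMutualInfo h Y C X = condMutualInfo h Y Z X := by
    simp only [condMutualInfo, Finset.union_comm _ X, ← Finset.union_assoc, hC.eq_left, hC.eq_union]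
  rw [copy_XY, copy_X, copy_Y, hC.condIndep] at bound
  rw [ZhangYeungInequality]
  linarith

end Polymatroid

/-! ### Entropic vectors -/

section Projection

variable {A B α β : Type*} [DecidableEq A] [DecidableEq B]

theorem proj_eq_iff {W : Finset A} {s t : A → α} : proj W s = proj W t ↔ ∀ a ∈ W, s a = t a := by
  simp only [proj, funext_iff]
  refine forall_congr' fun a => ?_
  split_ifs with ha <;> simp [ha]

theorem proj_injective_univ [Fintype A] :
    (proj Finset.univ : (A → α) → A → Option α).Injective := fun _ _ h =>
  funext fun a => proj_eq_iff.1 h a (Finset.mem_univ a)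

theorem proj_factorsThrough {U V : Finset A} (hUV : U ⊆ V) :
    (proj U : (A → α) → A → Option α).FactorsThrough (proj V) := fun _ _ h =>
  proj_eq_iff.2 fun a ha => proj_eq_iff.1 h a (hUV ha)

theorem proj_union_eq_iff {U V : Finset A} {s t : A → α} :
    proj (U ∪ V) s = proj (U ∪ V) t ↔ proj U s = proj U t ∧ proj V s = proj V t := by
  simp only [proj_eq_iff, Finset.forall_mem_union]

theorem proj_disjSum_eq_iff {U : Finset A} {V : Finset B} {x x' : A → α} {y y' : B → α} :
    proj (U.disjSum V) (Sum.elim x y) = proj (U.disjSum V) (Sum.elim x' y') ↔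
      proj U x = proj U x' ∧ proj V y = proj V y' := by
  simp only [proj_eq_iff, Sum.forall, Finset.inl_mem_disjSum, Finset.inr_mem_disjSum,
    Sum.elim_inl, Sum.elim_inr]

theorem disjSum_union_disjSum (U U' : Finset A) (V V' : Finset B) :
    U.disjSum V ∪ U'.disjSum V' = (U ∪ U').disjSum (V ∪ V') := by
  ext (a | b) <;> simp

end Projection

section JointEntropy

variable {Ω A α : Type*} [DecidableEq A] [Fintype A] [DecidableEq α] {S : Finset Ω} {w : Ω → ℝ}

/-- The entropic vector of the family of random variables `fun ω => X ω a`, indexed by `a`. For a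
relation `R`, `entropy P R` is `jointEntropy R P id` by definition. -/
def jointEntropy (S : Finset Ω) (w : Ω → ℝ) (X : Ω → A → α) (W : Finset A) : ℝ :=
  shannonEntropy S w fun s => proj W (X s)

theorem shannonEntropy_proj_prodMk (X : Ω → A → α) (U V : Finset A) :
    shannonEntropy S w (fun s => (proj U (X s), proj V (X s))) = jointEntropy S w X (U ∪ V) :=
  shannonEntropy_congr fun s _ t _ => by rw [Prod.mk.injEq, proj_union_eq_iff]

namespace IsDistribution

theorem isPolymatroid_jointEntropy (hw : IsDistribution S w) (X : Ω → A → α) :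
    IsPolymatroid (jointEntropy S w X) := by
  refine ⟨?_, fun U V hUV => ?_, fun U V => ?_⟩
  · simp [jointEntropy, shannonEntropy_eq_neg_sum, fiberMass, proj_eq_iff, hw.sum_eq_one]
  · exact hw.shannonEntropy_mono ((proj_factorsThrough hUV).comp_right X)
  · rw [ge_iff_le, ← shannonEntropy_proj_prodMk]
    exact hw.shannonEntropy_prodMk_add_le
      ((proj_factorsThrough Finset.inter_subset_left).comp_right X)
      ((proj_factorsThrough Finset.inter_subset_right).comp_right X)

end IsDistribution

/-- The entropic vector of two copies of the family `X` that share the variables in `B` and are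
conditionally independent given them. -/
def copyEntropy (S : Finset Ω) (w : Ω → ℝ) (X : Ω → A → α) (B : Finset A) :
    Finset (A ⊕ A) → ℝ :=
  jointEntropy (couplingSupport S fun s => proj B (X s)) (couplingWeight S w fun s => proj B (X s))
    fun z => Sum.elim (X z.1) (X z.2)

namespace IsDistribution

theorem isPolymatroid_copyEntropy (hw : IsDistribution S w) (X : Ω → A → α) (B : Finset A) :
    IsPolymatroid (copyEntropy S w X B) :=
  (hw.coupling _).isPolymatroid_jointEntropy _

theorem copyEntropy_disjSum_empty (hw : IsDistribution S w) (X : Ω → A → α) (B U : Finset A) :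
    copyEntropy S w X B (U.disjSum ∅) = jointEntropy S w X U := by
  rw [jointEntropy, ← hw.shannonEntropy_coupling_fst fun s => proj B (X s)]
  refine shannonEntropy_congr fun _ _ _ _ => ?_
  rw [proj_disjSum_eq_iff, and_iff_left]
  simp [proj_eq_iff]

theorem copyEntropy_disjSum_of_subset (hw : IsDistribution S w) (X : Ω → A → α)
    {B U : Finset A} (hU : U ⊆ B) (V : Finset A) :
    copyEntropy S w X B (U.disjSum V) = jointEntropy S w X (U ∪ V) := by
  rw [jointEntropy, ← hw.shannonEntropy_coupling_snd fun s => proj B (X s)]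
  have proj_fst_eq_snd : ∀ z ∈ couplingSupport S fun s => proj B (X s),
      proj U (X z.1) = proj U (X z.2) := fun z hz =>
    proj_factorsThrough hU (mem_couplingSupport.1 hz).2.2
  refine shannonEntropy_congr fun z hz z' hz' => ?_
  rw [proj_disjSum_eq_iff, proj_union_eq_iff, proj_fst_eq_snd z hz, proj_fst_eq_snd z' hz']

theorem copyEntropy_disjSum_of_superset (hw : IsDistribution S w) (X : Ω → A → α)
    {B U : Finset A} (hU : B ⊆ U) (V : Finset A) :
    copyEntropy S w X B (U.disjSum V) =
      jointEntropy S w X U + jointEntropy S w X (B ∪ V) - jointEntropy S w X B := by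
  have factors {W : Finset A} (hW : B ⊆ W) :
      Function.FactorsThrough (fun s => proj B (X s)) fun s => proj W (X s) :=
    (proj_factorsThrough hW).comp_right X
  refine .trans ?_ (hw.shannonEntropy_coupling_prodMk (factors hU)
    (factors (Finset.subset_union_left (s₂ := V))))
  refine shannonEntropy_congr fun z hz z' hz' => ?_
  have proj_snd_of_fst (hU_eq : proj U (X z.1) = proj U (X z'.1)) :
      proj B (X z.2) = proj B (X z'.2) :=
    (mem_couplingSupport.1 hz).2.2.symm.trans
      ((factors hU hU_eq).trans (mem_couplingSupport.1 hz').2.2)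
  rw [Prod.mk.injEq, proj_disjSum_eq_iff, proj_union_eq_iff]
  exact and_congr_right fun hU_eq => (and_iff_right (proj_snd_of_fst hU_eq)).symm

theorem isCopyOver_copyEntropy (hw : IsDistribution S w) (X : Ω → A → α) (U V Z T : Finset A) :
    IsCopyOver (copyEntropy S w X (U ∪ V)) (U.disjSum ∅) (V.disjSum ∅) (Z.disjSum ∅)
      (T.disjSum ∅) (Finset.disjSum ∅ Z) := by
  have copy_eq {W : Finset A} (hW : W ⊆ U ∪ V) :
      copyEntropy S w X (U ∪ V) (W.disjSum Z) =
        copyEntropy S w X (U ∪ V) ((W ∪ Z).disjSum ∅) := by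
    rw [hw.copyEntropy_disjSum_of_subset X hW, hw.copyEntropy_disjSum_empty]
  refine ⟨?eq_self, ?eq_left, ?eq_right, ?eq_union, ?condIndep⟩
  case eq_self => simpa only [Finset.empty_union] using copy_eq (Finset.empty_subset _)
  all_goals simp only [condMutualInfo, disjSum_union_disjSum, Finset.union_empty,
    Finset.empty_union]
  case eq_left => exact copy_eq Finset.subset_union_left
  case eq_right => exact copy_eq Finset.subset_union_right
  case eq_union => exact copy_eq subset_rfl
  case condIndep =>
    rw [hw.copyEntropy_disjSum_of_superset X Finset.subset_union_right Z, copy_eq subset_rfl]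
    simp only [hw.copyEntropy_disjSum_empty]
    ring

theorem zhangYeungInequality_jointEntropy (hw : IsDistribution S w) (X : Ω → A → α)
    (U V Z T : Finset A) : ZhangYeungInequality (jointEntropy S w X) U V Z T := by
  have copy := (hw.isPolymatroid_copyEntropy X (U ∪ V)).zhangYeungInequality_of_isCopyOver
    (hw.isCopyOver_copyEntropy X U V Z T)
  have empty_eq : copyEntropy S w X (U ∪ V) ∅ = jointEntropy S w X ∅ :=
    (hw.isPolymatroid_copyEntropy X (U ∪ V)).1.trans (hw.isPolymatroid_jointEntropy X).1.symm
  simpa only [ZhangYeungInequality, condMutualInfo, disjSum_union_disjSum, Finset.union_empty,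
    hw.copyEntropy_disjSum_empty, empty_eq] using copy

end IsDistribution

end JointEntropy

/-! ### Degree sequences bound entropic vectors -/

section FiberDegree

variable {Ω β δ : Type*} [DecidableEq β] [DecidableEq δ] {S : Finset Ω} {w : Ω → ℝ}

/-- The number of values of `g` that are compatible with `f = y`. For a relation `R`, `deg U V R`
is `fiberDegree R (proj U) (proj V)` by definition. -/
def fiberDegree (S : Finset Ω) (f : Ω → β) (g : Ω → δ) (y : β) : ℕ :=
  ({s ∈ S | f s = y}.image g).card

theorem fiberDegree_pos (f : Ω → β) (g : Ω → δ) {s : Ω} (hs : s ∈ S) :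
    0 < fiberDegree S f g (f s) :=
  Finset.card_pos.2 ⟨g s, Finset.mem_image_of_mem g (Finset.mem_filter.2 ⟨hs, rfl⟩)⟩

theorem sum_image_prodMk_fst (f : Ω → β) (g : Ω → δ) (q : β → ℝ) :
    ∑ z ∈ S.image (fun s => (f s, g s)), q z.1 = ∑ y ∈ S.image f, fiberDegree S f g y * q y := by
  rw [Finset.sum_finset_product' (f := fun y _ => q y) _ (S.image f)
    fun y => {s ∈ S | f s = y}.image g]
  · simp only [Finset.sum_const, nsmul_eq_mul, fiberDegree]
  · rintro ⟨y, z⟩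
    simp only [Finset.mem_image, Finset.mem_filter, Prod.mk.injEq]
    exact ⟨fun ⟨s, hs, hy, hz⟩ => ⟨⟨s, hs, hy⟩, s, ⟨hs, hy⟩, hz⟩,
      fun ⟨_, s, ⟨hs, hy⟩, hz⟩ => ⟨s, hs, hy, hz⟩⟩

/-- Gibbs' inequality for the joint law of `(f, g)` against the law with the same marginal `f`
under which `g` is uniform given `f`. -/
theorem IsDistribution.shannonEntropy_prodMk_sub_le (hw : IsDistribution S w) (f : Ω → β)
    (g : Ω → δ) :
    shannonEntropy S w (fun s => (f s, g s)) - shannonEntropy S w f ≤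
      ∑ s ∈ S, w s * Real.logb 2 (fiberDegree S f g (f s)) := by
  have degree_pos : ∀ s ∈ S, (0 : ℝ) < fiberDegree S f g (f s) := fun s hs =>
    Nat.cast_pos.2 (fiberDegree_pos f g hs)
  let q (y : β) : ℝ := fiberMass S w f y / fiberDegree S f g y
  have gibbs := hw.sum_mul_logb_add_shannonEntropy_le (fun s => (f s, g s)) (q := fun z => q z.1)
    fun s hs => div_pos (hw.fiberMass_pos f hs) (degree_pos s hs)
  have sum_q : ∑ z ∈ S.image (fun s => (f s, g s)), q z.1 = 1 := by
    rw [sum_image_prodMk_fst, ← hw.sum_eq_one]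
    calc ∑ y ∈ S.image f, fiberDegree S f g y * q y
        = ∑ y ∈ S.image f, fiberMass S w f y * 1 :=
          Finset.sum_congr rfl <| Finset.forall_mem_image.2 fun s hs => by
            rw [mul_div_cancel₀ _ (degree_pos s hs).ne', mul_one]
      _ = ∑ s ∈ S, w s := by
          simpa only [mul_one] using sum_fiberMass_mul f fun _ => 1
  have sum_logb_q : ∑ s ∈ S, w s * Real.logb 2 (q (f s)) =
      -shannonEntropy S w f - ∑ s ∈ S, w s * Real.logb 2 (fiberDegree S f g (f s)) := by
    rw [shannonEntropy_eq_neg_sum, neg_neg, ← Finset.sum_sub_distrib]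
    refine Finset.sum_congr rfl fun s hs => ?_
    rw [Real.logb_div (hw.fiberMass_pos f hs).ne' (degree_pos s hs).ne', mul_sub]
  rw [sum_q, Real.logb_one] at gibbs
  linarith

end FiberDegree

section DegreeBound

variable {A α : Type*} [Fintype A] [DecidableEq A] [DecidableEq α] {R : Finset (A → α)}
  {P : (A → α) → ℝ}

theorem deg_proj_pos (U V : Finset A) {t : A → α} (ht : t ∈ R) : 0 < deg U V R (proj U t) :=
  fiberDegree_pos (proj U) (proj V) ht

theorem sum_deg_rpow_pos (U V : Finset A) (hR : R.Nonempty) (r : ℝ) :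
    0 < ∑ u ∈ projR U R, (deg U V R u : ℝ) ^ r := by
  refine Finset.sum_pos (Finset.forall_mem_image.2 fun t ht => ?_) (hR.image _)
  exact Real.rpow_pos_of_pos (Nat.cast_pos.2 (deg_proj_pos U V ht)) r

theorem entropy_eq_jointEntropy (P : (A → α) → ℝ) (R : Finset (A → α)) :
    entropy P R = jointEntropy R P id :=
  rfl

theorem lpNorm_top (U V : Finset A) (R : Finset (A → α)) :
    lpNorm U V R ⊤ = ((projR U R).sup (deg U V R) : ℕ) :=
  if_pos rfl

theorem lpNorm_of_ne_top (U V : Finset A) (R : Finset (A → α)) {p : ℝ≥0∞} (hp : p ≠ ⊤) :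
    lpNorm U V R p = (∑ u ∈ projR U R, (deg U V R u : ℝ) ^ p.toReal) ^ (1 / p.toReal) :=
  if_neg hp

theorem deg_proj_le_lpNorm_top (U V : Finset A) {t : A → α} (ht : t ∈ R) :
    (deg U V R (proj U t) : ℝ) ≤ lpNorm U V R ⊤ := by
  rw [lpNorm_top, Nat.cast_le]
  exact Finset.le_sup (f := deg U V R) (Finset.mem_image_of_mem _ ht)

theorem lpNorm_pos (U V : Finset A) (hR : R.Nonempty) (p : ℝ≥0∞) : 0 < lpNorm U V R p := by
  obtain rfl | hp := eq_or_ne p ⊤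
  · obtain ⟨t, ht⟩ := hR
    exact (Nat.cast_pos.2 (deg_proj_pos U V ht)).trans_le (deg_proj_le_lpNorm_top U V ht)
  · rw [lpNorm_of_ne_top U V R hp]
    exact Real.rpow_pos_of_pos (sum_deg_rpow_pos U V hR _) _

namespace IsDistribution

theorem entropy_union_sub_le (hP : IsDistribution R P) (U V : Finset A) :
    entropy P R (U ∪ V) - entropy P R U ≤
      ∑ t ∈ R, P t * Real.logb 2 (deg U V R (proj U t)) := by
  rw [entropy_eq_jointEntropy, ← shannonEntropy_proj_prodMk]
  exact hP.shannonEntropy_prodMk_sub_le (proj U) (proj V)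

theorem statVal_entropy_top_le (hP : IsDistribution R P) (U V : Finset A) :
    statVal (entropy P R) U V ⊤ ≤ Real.logb 2 (lpNorm U V R ⊤) := by
  rw [statVal_top]
  refine (hP.entropy_union_sub_le U V).trans ?_
  calc ∑ t ∈ R, P t * Real.logb 2 (deg U V R (proj U t))
      ≤ ∑ t ∈ R, P t * Real.logb 2 (lpNorm U V R ⊤) := by
        refine Finset.sum_le_sum fun t ht => mul_le_mul_of_nonneg_left ?_ (hP.pos t ht).le
        exact Real.logb_le_logb_of_le one_lt_two (Nat.cast_pos.2 (deg_proj_pos U V ht))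
          (deg_proj_le_lpNorm_top U V ht)
    _ = Real.logb 2 (lpNorm U V R ⊤) := by rw [← Finset.sum_mul, hP.sum_eq_one, one_mul]

theorem entropy_add_mul_sub_le (hP : IsDistribution R P) (U V : Finset A) {r : ℝ} (hr : 0 ≤ r) :
    entropy P R U + r * (entropy P R (U ∪ V) - entropy P R U) ≤
      Real.logb 2 (∑ u ∈ projR U R, (deg U V R u : ℝ) ^ r) := by
  have degree_pos : ∀ t ∈ R, (0 : ℝ) < deg U V R (proj U t) := fun t ht =>
    Nat.cast_pos.2 (deg_proj_pos U V ht)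
  have gibbs : ∑ t ∈ R, P t * Real.logb 2 ((deg U V R (proj U t) : ℝ) ^ r) + entropy P R U ≤
      Real.logb 2 (∑ u ∈ projR U R, (deg U V R u : ℝ) ^ r) :=
    hP.sum_mul_logb_add_shannonEntropy_le (proj U) (q := fun u => (deg U V R u : ℝ) ^ r)
      fun t ht => Real.rpow_pos_of_pos (degree_pos t ht) r
  have sum_logb_rpow : ∑ t ∈ R, P t * Real.logb 2 ((deg U V R (proj U t) : ℝ) ^ r) =
      r * ∑ t ∈ R, P t * Real.logb 2 (deg U V R (proj U t)) := by
    rw [Finset.mul_sum]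
    refine Finset.sum_congr rfl fun t ht => ?_
    rw [Real.logb_rpow_eq_mul_logb_of_pos (degree_pos t ht), mul_left_comm]
  have conditional := mul_le_mul_of_nonneg_left (hP.entropy_union_sub_le U V) hr
  linarith

theorem statVal_entropy_le_logb_lpNorm (hP : IsDistribution R P) (U V : Finset A) {p : ℝ≥0∞}
    (hp : 0 < p) : statVal (entropy P R) U V p ≤ Real.logb 2 (lpNorm U V R p) := by
  obtain rfl | hp_top := eq_or_ne p ⊤
  · exact hP.statVal_entropy_top_le U V
  have r_pos : 0 < p.toReal := ENNReal.toReal_pos hp.ne' hp_top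
  rw [lpNorm_of_ne_top U V R hp_top,
    Real.logb_rpow_eq_mul_logb_of_pos (sum_deg_rpow_pos U V hP.nonempty p.toReal)]
  calc statVal (entropy P R) U V p
      = 1 / p.toReal * (entropy P R U + p.toReal * (entropy P R (U ∪ V) - entropy P R U)) := by
        rw [statVal, ENNReal.toReal_div, ENNReal.toReal_one]
        field_simp
    _ ≤ _ := mul_le_mul_of_nonneg_left (hP.entropy_add_mul_sub_le U V r_pos.le)
        (one_div_nonneg.2 r_pos.le)

end IsDistribution

end DegreeBound

/-! ### The separating polymatroid -/

section Separation

/-- The Zhang–Yeung polymatroid on four elements: elements have rank 2, pairs have rank 3 except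
that `{2, 3}` has rank 4, and larger sets have rank 4. -/
def zyRank (W : Finset (Fin 4)) : ℕ :=
  if W = ∅ then 0 else if W = {2, 3} then 4 else min (W.card + 1) 4

theorem isPolymatroid_zyRank : IsPolymatroid fun W => (zyRank W : ℝ) := by
  have mono : ∀ U V : Finset (Fin 4), U ⊆ V → zyRank U ≤ zyRank V := by decide +kernel
  have submodular : ∀ U V : Finset (Fin 4),
      zyRank (U ∪ V) + zyRank (U ∩ V) ≤ zyRank U + zyRank V := by decide +kernel
  exact ⟨Nat.cast_eq_zero.2 rfl, fun U V hUV => Nat.cast_le.2 (mono U V hUV),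
    fun U V => (by exact_mod_cast submodular U V :
      (zyRank (U ∪ V) + zyRank (U ∩ V) : ℝ) ≤ zyRank U + zyRank V)⟩

/-- The conditioning sets `U i` of the ten statistics `((V i | U i), p i)` with which the
Zhang–Yeung inequality separates entropic vectors from `zyRank`. The first seven bound the
positive terms of that inequality; the last three have `U i ∪ V i = univ`. -/
def statU : Fin 10 → Finset (Fin 4) :=
  ![{0}, {1}, {2}, ∅, ∅, ∅, ∅, {0, 1, 2}, {0, 1, 3}, {2, 3}]

/-- The conditioned sets `V i` of the separating statistics. -/
def statV : Fin 10 → Finset (Fin 4) :=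
  ![{2}, {2}, {0}, {1, 2}, {0, 1}, {0, 3}, {1, 3}, {3}, {2}, {0, 1}]

/-- The exponents `p i` of the separating statistics. -/
def statP : Fin 10 → ℝ≥0∞ :=
  ![⊤, ⊤, ⊤, 1, 1, 1, 1, 3, 3, 3]

/-- The log-statistics `b i` of the separating statistics, which `zyRank` attains. -/
def statB : Fin 10 → ℝ :=
  ![1, 1, 1, 3, 3, 3, 3, 4 / 3, 4 / 3, 4 / 3]

theorem statP_pos (i : Fin 10) : 0 < statP i := by
  fin_cases i <;> simp [statP]

theorem statB_pos (i : Fin 10) : 0 < statB i := by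
  fin_cases i <;> norm_num [statB]

theorem statVal_zyRank (i : Fin 10) :
    statVal (fun W => (zyRank W : ℝ)) (statU i) (statV i) (statP i) = statB i := by
  have rank_U : (fun i => zyRank (statU i)) = ![2, 2, 2, 0, 0, 0, 0, 4, 4, 4] := by
    decide +kernel
  have rank_UV : (fun i => zyRank (statU i ∪ statV i)) = ![3, 3, 3, 3, 3, 3, 3, 4, 4, 4] := by
    decide +kernel
  simp only [statVal, congr_fun rank_U i, congr_fun rank_UV i]
  fin_cases i <;> norm_num [statP, statB]

theorem coe_four_mul_le_logLBound {c : ℝ} (hc : 0 ≤ c) :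
    ((4 * c : ℝ) : EReal) ≤
      LogLBound (Gamma (Fin 4)) 10 statU statV statP fun i => c * statB i := by
  have rank_univ : zyRank Finset.univ = 4 := by decide +kernel
  refine le_sSup ⟨fun W => c * zyRank W, isPolymatroid_zyRank.const_mul hc, fun i => ?_, ?_⟩
  · rw [statVal_const_mul, statVal_zyRank]
  · simp only [rank_univ, Nat.cast_ofNat, mul_comm]

theorem univ_le_of_zhangYeungInequality {h : Finset (Fin 4) → ℝ}
    (zy : ZhangYeungInequality h {0} {1} {2} {3}) {c : ℝ}
    (hstat : ∀ i, statVal h (statU i) (statV i) (statP i) ≤ c * statB i) :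
    h Finset.univ ≤ 35 / 9 * c := by
  have h02_cond : statVal h {0} {2} ⊤ ≤ c * 1 := hstat 0
  have h12_cond : statVal h {1} {2} ⊤ ≤ c * 1 := hstat 1
  have h20_cond : statVal h {2} {0} ⊤ ≤ c * 1 := hstat 2
  have h12 : statVal h ∅ {1, 2} 1 ≤ c * 3 := hstat 3
  have h01 : statVal h ∅ {0, 1} 1 ≤ c * 3 := hstat 4
  have h03 : statVal h ∅ {0, 3} 1 ≤ c * 3 := hstat 5
  have h13 : statVal h ∅ {1, 3} 1 ≤ c * 3 := hstat 6
  have h012 : statVal h {0, 1, 2} {3} 3 ≤ c * (4 / 3) := hstat 7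
  have h013 : statVal h {0, 1, 3} {2} 3 ≤ c * (4 / 3) := hstat 8
  have h23 : statVal h {2, 3} {0, 1} 3 ≤ c * (4 / 3) := hstat 9
  rw [statVal_top, Finset.singleton_union] at h02_cond h12_cond h20_cond
  rw [statVal_one, Finset.empty_union] at h12 h01 h03 h13
  -- An `ℓ_3`-statistic with `U ∪ V = univ` bounds `h U` from below: `3 h(univ) - 4 c ≤ 2 h U`.
  have third : (1 / 3 : ℝ≥0∞).toReal = 1 / 3 := by simp
  have union_012 : ({0, 1, 2} ∪ {3} : Finset (Fin 4)) = Finset.univ := by decide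
  have union_013 : ({0, 1, 3} ∪ {2} : Finset (Fin 4)) = Finset.univ := by decide
  have union_23 : ({2, 3} ∪ {0, 1} : Finset (Fin 4)) = Finset.univ := by decide
  rw [statVal, third, union_012] at h012
  rw [statVal, third, union_013] at h013
  rw [statVal, third, union_23] at h23
  rw [zhangYeungInequality_iff] at zy
  simp only [Finset.insert_union, Finset.singleton_union] at zy
  rw [Finset.pair_comm] at h20_cond
  linarith

theorem logb_card_le_of_lpNorm_le {γ : Type*} [DecidableEq γ] {R : Finset (Fin 4 → γ)} {c : ℝ}
    (hc : 0 ≤ c) (hR : ∀ i, lpNorm (statU i) (statV i) R (statP i) ≤ 2 ^ (c * statB i)) :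
    Real.logb 2 R.card ≤ 35 / 9 * c := by
  obtain rfl | hR_ne := R.eq_empty_or_nonempty
  · rw [Finset.card_empty, Nat.cast_zero, Real.logb_zero]
    positivity
  have hP := isDistribution_uniform hR_ne
  have entropy_univ : entropy (fun _ => (R.card : ℝ)⁻¹) R Finset.univ = Real.logb 2 R.card :=
    shannonEntropy_uniform_of_injective hR_ne proj_injective_univ
  rw [← entropy_univ]
  refine univ_le_of_zhangYeungInequality (hP.zhangYeungInequality_jointEntropy id _ _ _ _)
    fun i => (hP.statVal_entropy_le_logb_lpNorm _ _ (statP_pos i)).trans ?_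
  exact (Real.logb_le_iff_le_rpow one_lt_two (lpNorm_pos _ _ hR_ne _)).2 (hR i)

end Separation

/-- **the polymatroid bound is not asymptotically tight.** There exist a full
conjunctive query over `n = 4` variables, guarded abstract statistics `Σ` and positive
log-statistics `b`, such that for every integer `k ≥ 1` and every database instance `D`
(over any domain) satisfying the `k`-amplified statistics
`‖deg_{D (j i)}(V i|U i)‖_{p i} ≤ 2^{k·b i}`, the output satisfies
`log₂ |Q(D)| ≤ (35/36) · Log-L-Bound_{Γ_n}(Σ, k·b)`. -/
theorem polymatroid_bound_not_tight :
    ∃ (m : ℕ) (Y : Fin m → Finset (Fin 4)) (s : ℕ)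
      (U V : Fin s → Finset (Fin 4)) (p : Fin s → ℝ≥0∞) (j : Fin s → Fin m) (b : Fin s → ℝ),
      (∀ x : Fin 4, ∃ k : Fin m, x ∈ Y k) ∧
      (∀ i, 0 < p i) ∧
      (∀ i, U i ∪ V i ⊆ Y (j i)) ∧
      (∀ i, 0 < b i) ∧
      ∀ (k : ℕ), 1 ≤ k →
        ∀ (γ : Type) [DecidableEq γ] (D : Fin m → Finset (Fin 4 → γ)) (Q : Finset (Fin 4 → γ)),
          (∀ i, lpNorm (U i) (V i) (D (j i)) (p i) ≤ 2 ^ ((k : ℝ) * b i)) →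
          (∀ t, t ∈ Q ↔ ∀ l : Fin m, ∃ t' ∈ D l, ∀ x ∈ Y l, t x = t' x) →
          ((Real.logb 2 Q.card : EReal)
            ≤ ((35 / 36 : ℝ) : EReal) *
                LogLBound (Gamma (Fin 4)) s U V p (fun i => (k : ℝ) * b i)) := by
  refine ⟨1, fun _ => Finset.univ, 10, statU, statV, statP, 0, statB,
    fun x => ⟨0, Finset.mem_univ x⟩, statP_pos, fun i => Finset.subset_univ _, statB_pos,
    fun k _ γ _ D Q hD hQ => ?_⟩
  have Q_eq : Q = D 0 := by
    ext t
    rw [hQ, Fin.forall_fin_one]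
    exact ⟨fun ⟨t', ht', h⟩ => funext (fun x => h x (Finset.mem_univ x)) ▸ ht',
      fun ht => ⟨t, ht, fun _ _ => rfl⟩⟩
  have entropic_bound : Real.logb 2 Q.card ≤ 35 / 9 * k :=
    Q_eq ▸ logb_card_le_of_lpNorm_le k.cast_nonneg hD
  calc (Real.logb 2 Q.card : EReal) ≤ ((35 / 36 * (4 * k) : ℝ) : EReal) :=
        EReal.coe_le_coe (by linarith)
    _ = ((35 / 36 : ℝ) : EReal) * ((4 * k : ℝ) : EReal) := EReal.coe_mul _ _
    _ ≤ ((35 / 36 : ℝ) : EReal) * LogLBound (Gamma (Fin 4)) 10 statU statV statP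
          fun i => (k : ℝ) * statB i :=
        mul_le_mul_of_nonneg_left (coe_four_mul_le_logLBound k.cast_nonneg)
          (EReal.coe_nonneg.2 (by norm_num))

end

end JoinBounds
end
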